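/- Let G be a finite connected simple bridgeless cubic graph. Then the line graph L(G) has no cut vertex: for every vertex w of L(G), the graph obtained from L(G) by deleting w remains connected. -/

import Mathlib

open SimpleGraph

/-!
Deleting the vertex `w` of `L(G)` gives the line graph of `G - w`, and `G - w` is still connected
when `w` is not a bridge. A walk between endpoints of two edges is traced by a walk in the line
graph, so the line graph of a connected graph with at least two vertices is connected.
-/

section

variable {V : Type*} {G : SimpleGraph V}

theorem lineGraph_reachable_of_mem {a : V} {e f : G.edgeSet}
    (he : a ∈ (e : Sym2 V)) (hf : a ∈ (f : Sym2 V)) : G.lineGraph.Reachable e f := by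
  obtain rfl | hne := eq_or_ne e f
  · rfl
  · exact (lineGraph_adj_iff_exists.2 ⟨hne, a, he, hf⟩).reachable

theorem lineGraph_reachable_of_walk {a b : V} (p : G.Walk a b) {e f : G.edgeSet}
    (he : a ∈ (e : Sym2 V)) (hf : b ∈ (f : Sym2 V)) : G.lineGraph.Reachable e f := by
  induction p generalizing e with
  | nil => exact lineGraph_reachable_of_mem he hf
  | @cons a c _ hac _ ih =>
    let ac : G.edgeSet := ⟨s(a, c), hac⟩
    have head : G.lineGraph.Reachable e ac :=
      lineGraph_reachable_of_mem he (Sym2.mem_mk_left a c)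
    have tail : G.lineGraph.Reachable ac f := ih (Sym2.mem_mk_right a c) hf
    exact head.trans tail

theorem lineGraph_preconnected (hG : G.Preconnected) : G.lineGraph.Preconnected := by
  intro e f
  obtain ⟨p⟩ := hG (e : Sym2 V).out.1 (f : Sym2 V).out.1
  exact lineGraph_reachable_of_walk p (Sym2.out_fst_mem _) (Sym2.out_fst_mem _)

theorem lineGraph_connected [Nontrivial V] (hG : G.Preconnected) : G.lineGraph.Connected where
  preconnected := lineGraph_preconnected hG
  nonempty := by
    obtain ⟨b, hab⟩ := hG.exists_adj_of_nontrivial (Classical.arbitrary V)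
    exact ⟨⟨s(_, b), hab⟩⟩

variable (G) in
/-- The identification `L(G - s) ≃ L(G) - s` for a set `s` of edges, which are deleted as edges of
`G` on the left and as vertices of `L(G)` on the right. Here `s` is a set of arbitrary unordered
pairs, as in `SimpleGraph.deleteEdges`. -/
def lineGraphDeleteEdgesIso (s : Set (Sym2 V)) :
    (G.deleteEdges s).lineGraph ≃g G.lineGraph.induce {f : G.edgeSet | (f : Sym2 V) ∉ s} where
  toFun e := have he := (edgeSet_deleteEdges s).subset e.2; ⟨⟨e, he.1⟩, he.2⟩
  invFun f := ⟨f.1, (edgeSet_deleteEdges s).superset ⟨f.1.2, f.2⟩⟩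
  left_inv _ := rfl
  right_inv _ := rfl
  map_rel_iff' := by simp [lineGraph_adj_iff_exists, Subtype.ext_iff]

end

theorem lineGraph_no_cutVertex_of_bridgeless_cubic_general {V : Type*} {G : SimpleGraph V}
    (hconn : G.Connected) (w : G.edgeSet) (hw : ¬ G.IsBridge w) :
    (G.lineGraph.induce {f : G.edgeSet | f ≠ w}).Connected := by
  obtain ⟨⟨u, v⟩, huv⟩ := w
  have : Nontrivial V := ⟨u, v, G.ne_of_adj huv⟩
  have hdelete : (G.deleteEdges {s(u, v)}).Connected :=
    hconn.connected_delete_edge_of_not_isBridge hw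
  have hverts : {f : G.edgeSet | f ≠ ⟨s(u, v), huv⟩} =
      {f : G.edgeSet | (f : Sym2 V) ∉ ({s(u, v)} : Set (Sym2 V))} := by
    ext f
    simp [Subtype.ext_iff]
  rw [hverts]
  exact (lineGraphDeleteEdgesIso G {s(u, v)}).connected_iff.1
    (lineGraph_connected hdelete.preconnected)

/-- **The line graph of a bridgeless cubic graph has no cut vertex.**
Let `G` be a finite connected simple bridgeless cubic graph.  Then for every vertex `w`
of the line graph `L(G)`, the graph obtained from `L(G)` by deleting `w` (and all edges
incident to `w`) remains connected. -/
theorem lineGraph_no_cutVertex_of_bridgeless_cubic {V : Type*} [Fintype V]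
    (G : SimpleGraph V) [DecidableRel G.Adj] (hconn : G.Connected)
    (hbridgeless : ∀ e : Sym2 V, ¬ G.IsBridge e) (hcubic : ∀ v : V, G.degree v = 3) :
    ∀ w : G.edgeSet, (G.lineGraph.induce {f : G.edgeSet | f ≠ w}).Connected :=
  fun w => lineGraph_no_cutVertex_of_bridgeless_cubic_general hconn w (hbridgeless w)
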